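/- arXiv:1504.06105 — 3 statements merged into one kernel-verified Lean document; each statement's English description precedes it below -/
import Mathlib

section
/- For every word u ∈ List ℚ and every m ∈ ℕ, the insertion of an m-gap at u, ι_u^m, is injective and preserves the prefix order and the lexicographic order in both directions: for all words w, v one has w ≼ v if and only if ι_u^m(w) ≼ ι_u^m(v), and w ⊑ v if and only if ι_u^m(w) ⊑ ι_u^m(v). -/
/-!
Both orders are determined letter by letter: comparing `a :: w` with `b :: v` only involves
`a`, `b` and, if `a = b`, the comparison of `w` with `v`. The insertion is computed along `u`
in the same way: at `[]` it prepends a block of zeros, and at `c :: u` it keeps the first letter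
and continues with the insertion at `u` exactly when that letter is `c`. Since two words with the
same first letter take the same branch, induction on `u` gives both equivalences. Injectivity
follows from the antisymmetry of the prefix order.
-/

namespace CLTL

/-- A word is a finite sequence of rationals. -/
abbrev Word := List ℚ

/-- Lexicographic order on lists over a linear order: `w ⊑ v` iff `w` is a prefix of `v`,
or they branch at some position with the letter of `w` smaller. -/
def lexLe {α : Type*} [LinearOrder α] (w v : List α) : Prop :=
  w <+: v ∨ ∃ (p : List α) (a b : α), a < b ∧ (p ++ [a]) <+: w ∧ (p ++ [b]) <+: v

/-- Longest common prefix of two lists. -/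
def lcp {α : Type*} [DecidableEq α] : List α → List α → List α
  | a :: w, b :: v => if a = b then a :: lcp w v else []
  | _, _ => []

/-- Iterated longest common prefix of a nonempty list of words. -/
def listLCP : List Word → Word
  | [] => []
  | [x] => x
  | x :: xs => lcp x (listLCP xs)

/-- Insertion of an `m`-gap at `u`. -/
def iota (u : Word) (m : ℕ) (w : Word) : Word :=
  if u <+: w then u ++ List.replicate m 0 ++ w.drop u.length else w

/-- The maximal common ancestor tree of a tuple `w` together with constants `C`:
`{ε}` together with all iterated longest common prefixes of nonempty subsets of entries. -/
def MCAT (C : List Word) {k : ℕ} (w : Fin k → Word) : Set Word :=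
  insert [] { x | ∃ I : Finset (Fin (k + C.length)),
    I.Nonempty ∧ x = listLCP (I.toList.map (Fin.append w C.get)) }

/-- `h` is the induced isomorphism witnessing `typ_C(w) = typ_C(v)`. -/
def IsInducedIso (C : List Word) {k : ℕ} (w v : Fin k → Word) (h : Word → Word) : Prop :=
  Set.BijOn h (MCAT C w) (MCAT C v) ∧
  (∀ x ∈ MCAT C w, ∀ y ∈ MCAT C w,
    (x <+: y ↔ h x <+: h y) ∧ (lexLe x y ↔ lexLe (h x) (h y))) ∧
  (∀ c ∈ C, h c = c) ∧
  (∀ i : Fin k, h (w i) = v i)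

/-- `typ_C(w) = typ_C(v)`. -/
def SameTyp (C : List Word) {k : ℕ} (w v : Fin k → Word) : Prop :=
  ∃ h : Word → Word, IsInducedIso C w v h

/-- The stretching condition on an isomorphism `h` of `MCAT_C(w)`:
`|h e| - |h d| ≥ |e| - |d|` whenever `d` is a proper prefix of `e`. -/
def StretchCond (C : List Word) {k : ℕ} (w : Fin k → Word) (h : Word → Word) : Prop :=
  ∀ d ∈ MCAT C w, ∀ e ∈ MCAT C w, d <+: e → d ≠ e →
    e.length + (h d).length ≤ (h e).length + d.length

/-- `w ≼* v` for tuples of words. -/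
def Stretch (C : List Word) {k : ℕ} (w v : Fin k → Word) : Prop :=
  ∃ h : Word → Word, IsInducedIso C w v h ∧ StretchCond C w h

/-- `≼*` on configurations. -/
def ConfigLe (C : List Word) {Q : Type*} {n : ℕ}
    (c d : Q × (Fin n → Word)) : Prop :=
  c.1 = d.1 ∧ Stretch C c.2 d.2

/-- A transition relation is type-invariant. -/
def TypeInvariant (C : List Word) {Q : Type*} {n : ℕ}
    (step : (Q × (Fin n → Word)) → (Q × (Fin n → Word)) → Prop) : Prop :=
  ∀ (q p : Q) (w v w' v' : Fin n → Word),
    step (q, w) (p, v) → SameTyp C (Fin.append w v) (Fin.append w' v') →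
      step (q, w') (p, v')

/-- Finite runs, indexed by `Fin (N+1)`. -/
def IsFinRun {Q : Type*} {n : ℕ}
    (step : (Q × (Fin n → Word)) → (Q × (Fin n → Word)) → Prop)
    {N : ℕ} (r : Fin (N + 1) → Q × (Fin n → Word)) : Prop :=
  ∀ i : Fin N, step (r i.castSucc) (r i.succ)

/-- Infinite runs. -/
def IsInfRun {Q : Type*} {n : ℕ}
    (step : (Q × (Fin n → Word)) → (Q × (Fin n → Word)) → Prop)
    (r : ℕ → Q × (Fin n → Word)) : Prop :=
  ∀ i : ℕ, step (r i) (r (i + 1))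

/-- The pair `(w, v)` (of tuples of equal type) is contracting. -/
def ContractingPair (C : List Word) {k : ℕ} (w v : Fin k → Word) : Prop :=
  ∃ h : Word → Word, IsInducedIso C w v h ∧
    ((∃ d ∈ MCAT C w, h d <+: d ∧ h d ≠ d) ∨
     (∃ d ∈ MCAT C w, ∃ e ∈ MCAT C w,
        d <+: e ∧ d ≠ e ∧ h e = e ∧ d <+: h d ∧ d ≠ h d))

/-- A set of words `T` has `n`-gaps above `B`. -/
def HasGaps (n : ℕ) (T B : Set Word) : Prop :=
  ∀ d ∈ T, ∀ e ∈ T, d <+: e → d ≠ e → (∀ b ∈ B, ¬ e <+: b) → n + d.length < e.length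

lemma lexLe_nil_left (v : Word) : lexLe [] v := Or.inl (List.nil_prefix)

lemma not_lexLe_cons_nil (a : ℚ) (w : Word) : ¬ lexLe (a :: w) [] := by
  simp [lexLe]

lemma lexLe_cons_cons (a b : ℚ) (w v : Word) :
    lexLe (a :: w) (b :: v) ↔ a < b ∨ a = b ∧ lexLe w v := by
  constructor
  · rintro (h | ⟨p, x, y, hxy, hw, hv⟩)
    · obtain ⟨hab, h⟩ := List.cons_prefix_cons.1 h
      exact Or.inr ⟨hab, Or.inl h⟩
    · cases p with
      | nil =>
        simp only [List.nil_append, List.cons_prefix_cons] at hw hv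
        left
        rw [← hw.1, ← hv.1]
        exact hxy
      | cons q p =>
        simp only [List.cons_append, List.cons_prefix_cons] at hw hv
        exact Or.inr ⟨hw.1.symm.trans hv.1, Or.inr ⟨p, x, y, hxy, hw.2, hv.2⟩⟩
  · rintro (h | ⟨rfl, h | ⟨p, x, y, hxy, hw, hv⟩⟩)
    · exact Or.inr ⟨[], a, b, h, by simp, by simp⟩
    · exact Or.inl (List.cons_prefix_cons.2 ⟨rfl, h⟩)
    · exact Or.inr ⟨a :: p, x, y, hxy, List.cons_prefix_cons.2 ⟨rfl, hw⟩,
        List.cons_prefix_cons.2 ⟨rfl, hv⟩⟩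

lemma lexLe_append_left (p w v : Word) : lexLe (p ++ w) (p ++ v) ↔ lexLe w v := by
  induction p with
  | nil => rfl
  | cons a p ih => simp [lexLe_cons_cons, ih]

lemma iota_nil_left (m : ℕ) (w : Word) : iota [] m w = List.replicate m 0 ++ w := by
  simp [iota]

lemma iota_cons_nil (c : ℚ) (u : Word) (m : ℕ) : iota (c :: u) m [] = [] := by
  simp [iota]

lemma iota_cons_cons (c : ℚ) (u : Word) (m : ℕ) (a : ℚ) (w : Word) :
    iota (c :: u) m (a :: w) = a :: (if a = c then iota u m w else w) := by
  by_cases hac : a = c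
  · subst hac
    by_cases h : u <+: w <;> simp [iota, h]
  · simp [iota, hac, Ne.symm hac]

lemma iota_prefix_iff (u : Word) (m : ℕ) (w v : Word) :
    w <+: v ↔ iota u m w <+: iota u m v := by
  induction u generalizing w v with
  | nil => simp [iota_nil_left]
  | cons c u ih =>
    cases w with
    | nil => simp [iota_cons_nil]
    | cons a w =>
      cases v with
      | nil => simp [iota_cons_nil, iota_cons_cons]
      | cons b v =>
        rw [iota_cons_cons, iota_cons_cons, List.cons_prefix_cons, List.cons_prefix_cons]
        refine and_congr_right ?_
        rintro rfl
        split_ifs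
        · exact ih w v
        · rfl

lemma iota_lexLe_iff (u : Word) (m : ℕ) (w v : Word) :
    lexLe w v ↔ lexLe (iota u m w) (iota u m v) := by
  induction u generalizing w v with
  | nil => simp [iota_nil_left, lexLe_append_left]
  | cons c u ih =>
    cases w with
    | nil => simp [iota_cons_nil, lexLe_nil_left]
    | cons a w =>
      cases v with
      | nil => simp [iota_cons_nil, iota_cons_cons, not_lexLe_cons_nil]
      | cons b v =>
        rw [iota_cons_cons, iota_cons_cons, lexLe_cons_cons, lexLe_cons_cons]
        refine or_congr_right (and_congr_right ?_)
        rintro rfl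
        split_ifs
        · exact ih w v
        · rfl

/-- Insertion of an `m`-gap at `u` is injective and preserves the prefix order and the
lexicographic order in both directions. -/
theorem stmt0 (u : Word) (m : ℕ) :
    Function.Injective (iota u m) ∧
    (∀ w v : Word, w <+: v ↔ iota u m w <+: iota u m v) ∧
    (∀ w v : Word, lexLe w v ↔ lexLe (iota u m w) (iota u m v)) := by
  refine ⟨fun w v h => ?_, iota_prefix_iff u m, iota_lexLe_iff u m⟩
  have hwv : w <+: v := (iota_prefix_iff u m w v).2 (h ▸ List.prefix_rfl)
  have hvw : v <+: w := (iota_prefix_iff u m v w).2 (h ▸ List.prefix_rfl)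
  exact hwv.eq_of_length_le hvw.length_le

end CLTL
end

section
/- The relation ≼* on configurations Q × (Fin n → List ℚ) (Q a finite set) is a well-quasi-order: it is reflexive and transitive, and every infinite sequence (c_i)_{i∈ℕ} of configurations contains indices i < j with c_i ≼* c_j. -/
/-!
The elements of `MCAT_C(w̄)` are indexed by the subsets `I` of the fixed finite index set
`Fin (k + C.length)`, the empty subset giving `ε` (`mem_MCAT_iff`). If the indexed families of two
tuples realise the same prefix and lexicographic relations, then sending the `I`-th element of the
first to the `I`-th element of the second is well defined and is the induced isomorphism; if
moreover all gaps between comparable elements grow, it is a stretching (`stretch_of_data`).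

A configuration is therefore controlled by a state and two relations on a finite set, which take
only finitely many values, and by a finite vector of natural numbers (the gaps), ordered
componentwise. By Dickson's lemma these data are well-quasi-ordered. Reflexivity and transitivity
come from the identity and from composing induced isomorphisms.
-/

namespace CLTL

/-- The element of `MCAT C w` with index set `I`: the longest common prefix of the entries
with indices in `I`. It is `ε` for `I = ∅`. -/
noncomputable def mcatElem (C : List Word) {k : ℕ} (w : Fin k → Word)
    (I : Finset (Fin (k + C.length))) : Word :=
  listLCP (I.toList.map (Fin.append w C.get))

theorem mem_MCAT_iff (C : List Word) {k : ℕ} (w : Fin k → Word) (x : Word) :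
    x ∈ MCAT C w ↔ ∃ I, mcatElem C w I = x := by
  constructor
  · rintro (rfl | ⟨I, -, rfl⟩)
    · exact ⟨∅, by simp [mcatElem, listLCP]⟩
    · exact ⟨I, rfl⟩
  · rintro ⟨I, rfl⟩
    rcases I.eq_empty_or_nonempty with rfl | hI
    · left
      simp [mcatElem, listLCP]
    · exact Or.inr ⟨I, hI, rfl⟩

theorem mcatElem_singleton (C : List Word) {k : ℕ} (w : Fin k → Word)
    (i : Fin (k + C.length)) : mcatElem C w {i} = Fin.append w C.get i := by
  simp [mcatElem, listLCP]

theorem stretch_refl (C : List Word) {k : ℕ} (w : Fin k → Word) : Stretch C w w :=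
  ⟨id, ⟨Set.bijOn_id _, fun _ _ _ _ => ⟨Iff.rfl, Iff.rfl⟩, fun _ _ => rfl, fun _ => rfl⟩,
    fun _ _ _ _ _ _ => le_of_eq (Nat.add_comm _ _ ▸ rfl)⟩

theorem stretch_trans (C : List Word) {k : ℕ} {u v w : Fin k → Word}
    (huv : Stretch C u v) (hvw : Stretch C v w) : Stretch C u w := by
  obtain ⟨g, ⟨gbij, gord, gconst, gentry⟩, gstr⟩ := huv
  obtain ⟨h, ⟨hbij, hord, hconst, hentry⟩, hstr⟩ := hvw
  refine ⟨h ∘ g, ⟨hbij.comp gbij, fun x hx y hy => ?_, fun c hc => ?_, fun i => ?_⟩, ?_⟩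
  · have h1 := gord x hx y hy
    have h2 := hord (g x) (gbij.mapsTo hx) (g y) (gbij.mapsTo hy)
    exact ⟨h1.1.trans h2.1, h1.2.trans h2.2⟩
  · simp [gconst c hc, hconst c hc]
  · simp [gentry, hentry]
  · intro d hd e he hde hne
    have h1 := gstr d hd e he hde hne
    have h2 := hstr (g d) (gbij.mapsTo hd) (g e) (gbij.mapsTo he)
      ((gord d hd e he).1.1 hde) (fun heq => hne (gbij.injOn hd he heq))
    simp only [Function.comp]
    omega

/-- Agreement of the order relations on the indexed families, together with growth of the gaps,
suffices for `w ≼* v`. The gaps are truncated differences, which are the true ones on comparable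
pairs. -/
theorem stretch_of_data (C : List Word) {k : ℕ} (w v : Fin k → Word)
    (hpre : ∀ I J, mcatElem C w I <+: mcatElem C w J ↔ mcatElem C v I <+: mcatElem C v J)
    (hlex : ∀ I J,
      lexLe (mcatElem C w I) (mcatElem C w J) ↔ lexLe (mcatElem C v I) (mcatElem C v J))
    (hgap : ∀ I J, (mcatElem C w J).length - (mcatElem C w I).length ≤
      (mcatElem C v J).length - (mcatElem C v I).length) :
    Stretch C w v := by
  have antisymm : ∀ {x y : Word}, x <+: y → y <+: x → x = y := fun h h' =>
    h.eq_of_length_le h'.length_le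
  have hinj : ∀ I J, mcatElem C w I = mcatElem C w J ↔ mcatElem C v I = mcatElem C v J := by
    intro I J
    constructor
    · intro h
      exact antisymm ((hpre I J).1 (h ▸ List.prefix_rfl)) ((hpre J I).1 (h ▸ List.prefix_rfl))
    · intro h
      exact antisymm ((hpre I J).2 (h ▸ List.prefix_rfl)) ((hpre J I).2 (h ▸ List.prefix_rfl))
  obtain ⟨h, hh⟩ : ∃ h : Word → Word, ∀ I, h (mcatElem C w I) = mcatElem C v I :=
    ⟨Function.extend (mcatElem C w) (mcatElem C v) id, fun I =>
      Function.FactorsThrough.extend_apply (fun I J hIJ => (hinj I J).1 hIJ) _ I⟩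
  refine ⟨h, ⟨⟨?_, ?_, ?_⟩, ?_, ?_, ?_⟩, ?_⟩
  · intro x hx
    obtain ⟨I, rfl⟩ := (mem_MCAT_iff C w x).1 hx
    exact (mem_MCAT_iff C v _).2 ⟨I, (hh I).symm⟩
  · intro x hx y hy hxy
    obtain ⟨I, rfl⟩ := (mem_MCAT_iff C w x).1 hx
    obtain ⟨J, rfl⟩ := (mem_MCAT_iff C w y).1 hy
    rw [hh, hh] at hxy
    exact (hinj I J).2 hxy
  · intro y hy
    obtain ⟨I, rfl⟩ := (mem_MCAT_iff C v y).1 hy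
    exact ⟨mcatElem C w I, (mem_MCAT_iff C w _).2 ⟨I, rfl⟩, hh I⟩
  · intro x hx y hy
    obtain ⟨I, rfl⟩ := (mem_MCAT_iff C w x).1 hx
    obtain ⟨J, rfl⟩ := (mem_MCAT_iff C w y).1 hy
    rw [hh, hh]
    exact ⟨hpre I J, hlex I J⟩
  · intro c hc
    obtain ⟨i, rfl⟩ := List.get_of_mem hc
    simpa only [mcatElem_singleton, Fin.append_right] using hh {Fin.natAdd k i}
  · intro i
    simpa only [mcatElem_singleton, Fin.append_left] using hh {Fin.castAdd C.length i}
  · intro d hd e he hde _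
    obtain ⟨I, rfl⟩ := (mem_MCAT_iff C w d).1 hd
    obtain ⟨J, rfl⟩ := (mem_MCAT_iff C w e).1 he
    rw [hh, hh]
    have h1 := hde.length_le
    have h2 := ((hpre I J).1 hde).length_le
    have h3 := hgap I J
    omega

/-- `≼*` on configurations over a finite state set is a well-quasi-order: it is reflexive,
transitive, and every infinite sequence of configurations contains an increasing pair. -/
theorem stmt4 (C : List Word) (hC : ∀ c ∈ C, ∀ c' : Word, c' <+: c → c' ∈ C)
    {Q : Type*} [Fintype Q] {n : ℕ} :
    (∀ c : Q × (Fin n → Word), ConfigLe C c c) ∧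
    (∀ c d e : Q × (Fin n → Word), ConfigLe C c d → ConfigLe C d e → ConfigLe C c e) ∧
    (∀ f : ℕ → Q × (Fin n → Word), ∃ i j : ℕ, i < j ∧ ConfigLe C (f i) (f j)) := by
  refine ⟨fun c => ⟨rfl, stretch_refl C c.2⟩,
    fun c d e hcd hde => ⟨hcd.1.trans hde.1, stretch_trans C hcd.2 hde.2⟩, fun f => ?_⟩
  -- The finite part of the data is compared by equality, the gaps componentwise.
  let fin : ℕ → Q × (Finset (Fin (n + C.length)) → Finset (Fin (n + C.length)) → Prop × Prop) :=
    fun t => ((f t).1, fun I J =>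
      (mcatElem C (f t).2 I <+: mcatElem C (f t).2 J,
        lexLe (mcatElem C (f t).2 I) (mcatElem C (f t).2 J)))
  let gaps : ℕ → Finset (Fin (n + C.length)) × Finset (Fin (n + C.length)) → ℕ :=
    fun t p => (mcatElem C (f t).2 p.2).length - (mcatElem C (f t).2 p.1).length
  obtain ⟨i, j, hij, hfin, hgaps⟩ :=
    ((Finite.wellQuasiOrdered Eq).prod wellQuasiOrdered_le) (fun t => (fin t, gaps t))
  replace hfin : fin i = fin j := hfin
  have hstate : (fin i).1 = (fin j).1 := by rw [hfin]
  have hrel : ∀ I J, (fin i).2 I J = (fin j).2 I J := fun I J => by rw [hfin]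
  exact ⟨i, j, hij, hstate, stretch_of_data C _ _
    (fun I J => iff_of_eq (congrArg Prod.fst (hrel I J)))
    (fun I J => iff_of_eq (congrArg Prod.snd (hrel I J)))
    (fun I J => hgaps (I, J))⟩

end CLTL
end

section
/- Let → be a type-invariant transition relation. Then → and its inverse are strongly upward compatible with respect to ≼*: (i) if c → d and c ≼* c', then there exists d' with d ≼* d' and c' → d'; (ii) if c → d and d ≼* d', then there exists c' with c ≼* c' and c' → d'. -/
/-!
The proof extends the induced isomorphism `h` on `MCAT C w` to a map `g` of all words which is a
*tree embedding* (`IsTreeEmb`): below every node `y` there is a strictly increasing relabelling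
`φ y` of the outgoing letters such that `g (y ++ [b])` extends `g y ++ [φ y b]`. Tree embeddings
preserve longest common prefixes, preserve and reflect `≼` and `⊑`, and never shrink distances, so
a tree embedding fixing the constants witnesses both `typ_C(u) = typ_C(g ∘ u)` and
`u ≼* g ∘ u` for *every* tuple `u` (`IsTreeEmb.isInducedIso`, `IsTreeEmb.stretchCond`). Given
`(q, w) → (p, v)` and `w ≼* w'`, the tuple `v' = g ∘ v` is then the required one, because
`w' = g ∘ w` and the type of `(w, v)` equals that of `(g ∘ w, g ∘ v)`. The inverse relation is
treated identically.

The extension (`exists_treeEmb`) is built as follows. If `x` lies below an element of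
`S = MCAT C w`, let `e` be the least element of `S` above `x`, and send `x` to the prefix of `h e`
that is `|e| - |x|` letters shorter than `h e`. The stretching condition guarantees that this prefix
still lies strictly above `h d` for every `d ∈ S` strictly below `x`. At a node `y` the letters of
the finitely many children lying below elements of `S` are mapped in an order-preserving way since
`h` respects `⊑` and meets; this finite partial map extends to a strictly increasing map `ℚ → ℚ`
(`exists_strictMono_extension`), which is used to place the remaining branches.
-/

namespace CLTL

/-! ### Prefixes, longest common prefixes and the lexicographic order -/

theorem prefix_antisymm' {x y : Word} (h₁ : x <+: y) (h₂ : y <+: x) : x = y :=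
  h₁.eq_of_length_le h₂.length_le

theorem prefix_lcp_iff {x a b : Word} : x <+: lcp a b ↔ x <+: a ∧ x <+: b := by
  induction a generalizing x b with
  | nil => cases b <;> (simp [lcp]; try (rintro rfl; simp))
  | cons c a ih =>
    cases b with
    | nil => simp [lcp]; rintro rfl; simp
    | cons d b =>
      cases x with
      | nil => simp
      | cons e x =>
        by_cases hcd : c = d
        · subst hcd
          simp only [lcp, if_true, List.cons_prefix_cons, ih]
          tauto
        · simp only [lcp, hcd, if_false, List.cons_prefix_cons, List.prefix_nil]
          constructor
          · intro h; cases h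
          · rintro ⟨⟨rfl, _⟩, rfl, _⟩
            exact absurd rfl hcd

theorem lcp_eq_of_forall {a b m : Word} (h : ∀ x, x <+: m ↔ x <+: a ∧ x <+: b) : lcp a b = m :=
  prefix_antisymm' ((h _).2 (prefix_lcp_iff.1 List.prefix_rfl))
    (prefix_lcp_iff.2 ((h _).1 List.prefix_rfl))

theorem lcp_eq_left {a b : Word} (h : a <+: b) : lcp a b = a :=
  lcp_eq_of_forall fun _ => ⟨fun hx => ⟨hx, hx.trans h⟩, fun hx => hx.1⟩

theorem lcp_eq_right {a b : Word} (h : b <+: a) : lcp a b = b :=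
  lcp_eq_of_forall fun _ => ⟨fun hx => ⟨hx.trans h, hx⟩, fun hx => hx.2⟩

theorem letter_unique {p x : Word} {a b : ℚ} (ha : p ++ [a] <+: x) (hb : p ++ [b] <+: x) :
    a = b := by
  have h := (List.prefix_of_prefix_length_le ha hb (by simp)).eq_of_length (by simp)
  simpa using h

theorem exists_next {y x : Word} (h : y <+: x) (hl : y.length < x.length) :
    ∃ a, y ++ [a] <+: x := by
  obtain ⟨t, rfl⟩ := h
  cases t with
  | nil => simp at hl
  | cons a t => exact ⟨a, t, by simp⟩

theorem concat_prefix_of_lt {y x u : Word} {b : ℚ} (hb : y ++ [b] <+: u) (hx : x <+: u)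
    (hl : y.length < x.length) : y ++ [b] <+: x :=
  List.prefix_of_prefix_length_le hb hx (by simpa using hl)

theorem lcp_eq_of_branch {p x y : Word} {a b : ℚ} (hab : a ≠ b)
    (ha : p ++ [a] <+: x) (hb : p ++ [b] <+: y) : lcp x y = p := by
  have hpx : p <+: x := (List.prefix_append _ _).trans ha
  have hpy : p <+: y := (List.prefix_append _ _).trans hb
  refine lcp_eq_of_forall fun z => ⟨fun hz => ⟨hz.trans hpx, hz.trans hpy⟩, ?_⟩
  rintro ⟨hzx, hzy⟩
  by_contra hz
  have hl : p.length < z.length := by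
    by_contra hl
    exact hz (List.prefix_of_prefix_length_le hzx hpx (by omega))
  exact hab (letter_unique (concat_prefix_of_lt ha hzx hl) (concat_prefix_of_lt hb hzy hl))

theorem prefix_or_branch (x y : Word) : x <+: y ∨ y <+: x ∨
    ∃ (p : Word) (a b : ℚ), a ≠ b ∧ p ++ [a] <+: x ∧ p ++ [b] <+: y := by
  obtain ⟨hx, hy⟩ := prefix_lcp_iff.1 (List.prefix_rfl (l := lcp x y))
  rcases Nat.lt_or_ge (lcp x y).length x.length with h₁ | h₁
  · rcases Nat.lt_or_ge (lcp x y).length y.length with h₂ | h₂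
    · obtain ⟨a, ha⟩ := exists_next hx h₁
      obtain ⟨b, hb⟩ := exists_next hy h₂
      refine Or.inr (Or.inr ⟨_, a, b, ?_, ha, hb⟩)
      rintro rfl
      have := (prefix_lcp_iff.2 ⟨ha, hb⟩).length_le
      simp at this
    · right; left
      rw [← hy.eq_of_length_le h₂]; exact hx
  · left
    rw [← hx.eq_of_length_le h₁]; exact hy

theorem not_prefix_of_branch {p x y : Word} {a b : ℚ} (hab : a ≠ b)
    (ha : p ++ [a] <+: x) (hb : p ++ [b] <+: y) : ¬ x <+: y := fun h =>
  hab (letter_unique (ha.trans h) hb)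

theorem lexLe_iff_of_branch {p x y : Word} {a b : ℚ} (hab : a ≠ b)
    (ha : p ++ [a] <+: x) (hb : p ++ [b] <+: y) : lexLe x y ↔ a < b := by
  constructor
  · rintro (h | ⟨p', a', b', hab', ha', hb'⟩)
    · exact absurd h (not_prefix_of_branch hab ha hb)
    · have hp : p = p' := by
        rw [← lcp_eq_of_branch hab ha hb, lcp_eq_of_branch hab'.ne ha' hb']
      subst hp
      rwa [letter_unique ha ha', letter_unique hb hb']
  · intro h
    exact Or.inr ⟨p, a, b, h, ha, hb⟩

theorem lexLe_prefix_antisymm {x y : Word} (h : lexLe x y) (hyx : y <+: x) : x = y := by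
  rcases h with h | ⟨p, a, b, hab, ha, hb⟩
  · exact prefix_antisymm' h hyx
  · exact absurd hyx (not_prefix_of_branch hab.ne' hb ha)

theorem prefix_listLCP_iff {x : Word} {l : List Word} (hl : l ≠ []) :
    x <+: listLCP l ↔ ∀ a ∈ l, x <+: a := by
  induction l with
  | nil => exact absurd rfl hl
  | cons a l ih =>
    cases l with
    | nil => simp [listLCP]
    | cons b l =>
      rw [listLCP, prefix_lcp_iff, ih (by simp)]
      · simp
      · simp

/-! ### The maximal common ancestor tree -/

theorem nil_mem_MCAT (C : List Word) {k : ℕ} (w : Fin k → Word) : [] ∈ MCAT C w :=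
  Set.mem_insert _ _

theorem MCAT_finite (C : List Word) {k : ℕ} (w : Fin k → Word) : (MCAT C w).Finite := by
  refine Set.Finite.insert _ (Set.Finite.subset (Set.finite_range
    fun I : Finset (Fin (k + C.length)) => listLCP (I.toList.map (Fin.append w C.get))) ?_)
  rintro x ⟨I, -, rfl⟩
  exact ⟨I, rfl⟩

theorem append_mem_MCAT (C : List Word) {k : ℕ} (w : Fin k → Word) (i : Fin (k + C.length)) :
    Fin.append w C.get i ∈ MCAT C w :=
  Or.inr ⟨{i}, by simp, by simp [listLCP]⟩

theorem entry_mem_MCAT (C : List Word) {k : ℕ} (w : Fin k → Word) (i : Fin k) :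
    w i ∈ MCAT C w := by
  simpa using append_mem_MCAT C w (Fin.castAdd _ i)

theorem const_mem_MCAT (C : List Word) {k : ℕ} (w : Fin k → Word) {c : Word} (hc : c ∈ C) :
    c ∈ MCAT C w := by
  obtain ⟨i, rfl⟩ := List.mem_iff_get.1 hc
  simpa using append_mem_MCAT C w (Fin.natAdd _ i)

theorem prefix_listLCP_finset_iff {C : List Word} {k : ℕ} {w : Fin k → Word}
    {I : Finset (Fin (k + C.length))} (hI : I.Nonempty) {x : Word} :
    x <+: listLCP (I.toList.map (Fin.append w C.get)) ↔
      ∀ i ∈ I, x <+: Fin.append w C.get i := by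
  rw [prefix_listLCP_iff (by simpa using hI.ne_empty)]
  simp

theorem lcp_mem_MCAT {C : List Word} {k : ℕ} {w : Fin k → Word} {x y : Word}
    (hx : x ∈ MCAT C w) (hy : y ∈ MCAT C w) : lcp x y ∈ MCAT C w := by
  rcases hx with rfl | ⟨I, hI, rfl⟩
  · rw [lcp_eq_left (List.nil_prefix)]
    exact nil_mem_MCAT C w
  rcases hy with rfl | ⟨J, hJ, rfl⟩
  · rw [lcp_eq_right (List.nil_prefix)]
    exact nil_mem_MCAT C w
  have hIJ : (I ∪ J).Nonempty := hI.mono Finset.subset_union_left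
  refine Or.inr ⟨I ∪ J, hIJ, lcp_eq_of_forall fun z => ?_⟩
  rw [prefix_listLCP_finset_iff hIJ, prefix_listLCP_finset_iff hI, prefix_listLCP_finset_iff hJ]
  simp only [Finset.mem_union]
  exact ⟨fun h => ⟨fun i hi => h i (Or.inl hi), fun i hi => h i (Or.inr hi)⟩,
    fun h i hi => hi.elim (h.1 i) (h.2 i)⟩

/-- Every word below an element of the tree has a least element of the tree above it. -/
theorem exists_least_above {C : List Word} {k : ℕ} {w : Fin k → Word} {x : Word}
    (hx : ∃ s ∈ MCAT C w, x <+: s) :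
    ∃ u ∈ MCAT C w, x <+: u ∧ ∀ s ∈ MCAT C w, x <+: s → u <+: s := by
  obtain ⟨u, ⟨hu, hxu⟩, hmin⟩ := exists_minimalFor_of_wellFoundedLT
    (fun s => s ∈ MCAT C w ∧ x <+: s) List.length hx
  refine ⟨u, hu, hxu, fun s hs hxs => ?_⟩
  obtain ⟨h₁, h₂⟩ := prefix_lcp_iff.1 (List.prefix_rfl (l := lcp u s))
  have hle := hmin (j := lcp u s) ⟨lcp_mem_MCAT hu hs, prefix_lcp_iff.2 ⟨hxu, hxs⟩⟩ h₁.length_le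
  rwa [h₁.eq_of_length_le hle] at h₂

/-! ### Tree embeddings -/

/-- `g` embeds the tree of all words into itself: the root is fixed, and the children of a node `y`
are sent above distinct children of `g y`, in the same left-to-right order. The image of a child may
lie arbitrarily high above the corresponding child of `g y`. -/
def IsTreeEmb (g : Word → Word) : Prop :=
  g [] = [] ∧ ∃ φ : Word → ℚ → ℚ, (∀ y, StrictMono (φ y)) ∧
    ∀ y b, g y ++ [φ y b] <+: g (y ++ [b])

namespace IsTreeEmb

variable {g : Word → Word}

theorem append (hg : IsTreeEmb g) (y z : Word) :
    g y <+: g (y ++ z) ∧ (g y).length + z.length ≤ (g (y ++ z)).length := by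
  obtain ⟨-, φ, -, hφ⟩ := hg
  induction z using List.reverseRecOn with
  | nil => simp
  | append_singleton z b ih =>
    have h := hφ (y ++ z) b
    rw [List.append_assoc] at h
    refine ⟨ih.1.trans ((List.prefix_append _ _).trans h), ?_⟩
    have hl := h.length_le
    simp only [List.length_append, List.length_singleton] at hl ⊢
    omega

theorem mono (hg : IsTreeEmb g) {x y : Word} (h : x <+: y) : g x <+: g y := by
  obtain ⟨z, rfl⟩ := h
  exact (hg.append x z).1

theorem length_add_le (hg : IsTreeEmb g) {x y : Word} (h : x <+: y) :
    y.length + (g x).length ≤ (g y).length + x.length := by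
  obtain ⟨z, rfl⟩ := h
  have := (hg.append x z).2
  simp only [List.length_append]
  omega

theorem branch (hg : IsTreeEmb g) {p x y : Word} {a b : ℚ}
    (ha : p ++ [a] <+: x) (hb : p ++ [b] <+: y) :
    ∃ a' b', (a' < b' ↔ a < b) ∧ (a' = b' ↔ a = b) ∧ g p ++ [a'] <+: g x ∧ g p ++ [b'] <+: g y := by
  obtain ⟨φ, hmono, hφ⟩ := hg.2
  exact ⟨φ p a, φ p b, (hmono p).lt_iff_lt, (hmono p).injective.eq_iff,
    (hφ p a).trans (hg.mono ha), (hφ p b).trans (hg.mono hb)⟩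

theorem prefix_iff (hg : IsTreeEmb g) {x y : Word} : x <+: y ↔ g x <+: g y := by
  refine ⟨hg.mono, fun h => ?_⟩
  rcases prefix_or_branch x y with h' | h' | ⟨p, a, b, hab, ha, hb⟩
  · exact h'
  · have h₁ := hg.length_add_le h'
    have h₂ := h.length_le
    rw [h'.eq_of_length_le (by omega)]
  · obtain ⟨a', b', -, he, ha', hb'⟩ := hg.branch ha hb
    exact absurd h (not_prefix_of_branch (fun h => hab (he.1 h)) ha' hb')

theorem injective (hg : IsTreeEmb g) : Function.Injective g := fun x y h =>
  prefix_antisymm' (hg.prefix_iff.2 (h ▸ List.prefix_rfl)) (hg.prefix_iff.2 (h ▸ List.prefix_rfl))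

theorem lexLe_iff (hg : IsTreeEmb g) {x y : Word} : lexLe x y ↔ lexLe (g x) (g y) := by
  rcases prefix_or_branch x y with h | h | ⟨p, a, b, hab, ha, hb⟩
  · exact ⟨fun _ => Or.inl (hg.mono h), fun _ => Or.inl h⟩
  · constructor
    · intro h'
      rw [lexLe_prefix_antisymm h' h]
      exact Or.inl List.prefix_rfl
    · intro h'
      rw [hg.injective (lexLe_prefix_antisymm h' (hg.mono h))]
      exact Or.inl List.prefix_rfl
  · obtain ⟨a', b', hlt, he, ha', hb'⟩ := hg.branch ha hb
    rw [lexLe_iff_of_branch hab ha hb, lexLe_iff_of_branch (fun h => hab (he.1 h)) ha' hb', hlt]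

theorem map_lcp (hg : IsTreeEmb g) (x y : Word) : g (lcp x y) = lcp (g x) (g y) := by
  rcases prefix_or_branch x y with h | h | ⟨p, a, b, hab, ha, hb⟩
  · rw [lcp_eq_left h, lcp_eq_left (hg.mono h)]
  · rw [lcp_eq_right h, lcp_eq_right (hg.mono h)]
  · obtain ⟨a', b', -, he, ha', hb'⟩ := hg.branch ha hb
    rw [lcp_eq_of_branch hab ha hb, lcp_eq_of_branch (fun h => hab (he.1 h)) ha' hb']

theorem map_listLCP (hg : IsTreeEmb g) (l : List Word) :
    g (listLCP l) = listLCP (l.map g) := by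
  induction l with
  | nil => exact hg.1
  | cons a l ih =>
    cases l with
    | nil => simp [listLCP]
    | cons b l =>
      rw [listLCP, hg.map_lcp, ih]
      · simp [listLCP]
      · simp

theorem image_MCAT (hg : IsTreeEmb g) {C : List Word} (hC : ∀ c ∈ C, g c = c)
    {k : ℕ} (w : Fin k → Word) : g '' MCAT C w = MCAT C (g ∘ w) := by
  have happ : Fin.append (g ∘ w) C.get = g ∘ Fin.append w C.get := by
    funext i
    refine Fin.addCases (fun j => ?_) (fun j => ?_) i
    · simp
    · simpa using (hC _ (List.getElem_mem _)).symm
  have hI : ∀ I : Finset (Fin (k + C.length)),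
      listLCP (I.toList.map (Fin.append (g ∘ w) C.get)) =
        g (listLCP (I.toList.map (Fin.append w C.get))) := by
    intro I
    rw [happ, hg.map_listLCP, List.map_map]
  ext x
  constructor
  · rintro ⟨y, rfl | ⟨I, hne, rfl⟩, rfl⟩
    · rw [hg.1]; exact nil_mem_MCAT _ _
    · exact Or.inr ⟨I, hne, (hI I).symm⟩
  · rintro (rfl | ⟨I, hne, rfl⟩)
    · exact ⟨[], nil_mem_MCAT _ _, hg.1⟩
    · exact ⟨_, Or.inr ⟨I, hne, rfl⟩, (hI I).symm⟩

/-- A tree embedding fixing the constants preserves the type of every tuple. -/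
theorem isInducedIso (hg : IsTreeEmb g) {C : List Word} (hC : ∀ c ∈ C, g c = c)
    {k : ℕ} (w : Fin k → Word) : IsInducedIso C w (g ∘ w) g := by
  refine ⟨?_, fun _ _ _ _ => ⟨hg.prefix_iff, hg.lexLe_iff⟩, hC, fun _ => rfl⟩
  rw [← hg.image_MCAT hC]
  exact hg.injective.injOn.bijOn_image

theorem stretchCond (hg : IsTreeEmb g) (C : List Word) {k : ℕ} (w : Fin k → Word) :
    StretchCond C w g := fun _ _ _ _ h _ => hg.length_add_le h

end IsTreeEmb

/-! ### Extending a stretching isomorphism to a tree embedding -/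

/-- A map that is strictly increasing on a finite set of rationals agrees there with a strictly
increasing map on all of `ℚ`; this is the forth half of Cantor's back-and-forth argument. -/
theorem exists_strictMono_extension {A : Set ℚ} (hA : A.Finite) (f : ℚ → ℚ)
    (hf : ∀ a ∈ A, ∀ b ∈ A, a < b → f a < f b) :
    ∃ φ : ℚ → ℚ, StrictMono φ ∧ ∀ a ∈ A, φ a = f a := by
  classical
  have hcmp : ∀ a ∈ A, ∀ b ∈ A, cmp a b = cmp (f a) (f b) := by
    intro a ha b hb
    rcases lt_trichotomy a b with h | h | h
    · rw [h.cmp_eq_lt, (hf a ha b hb h).cmp_eq_lt]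
    · rw [h, cmp_self_eq_eq, cmp_self_eq_eq]
    · rw [h.cmp_eq_gt, (hf b hb a ha h).cmp_eq_gt]
  let p : Order.PartialIso ℚ ℚ := ⟨hA.toFinset.image fun a => (a, f a), by
    intro x hx y hy
    simp only [Finset.mem_image, Set.Finite.mem_toFinset] at hx hy
    obtain ⟨a, ha, rfl⟩ := hx
    obtain ⟨b, hb, rfl⟩ := hy
    exact hcmp a ha b hb⟩
  let I : Order.Ideal (Order.PartialIso ℚ ℚ) :=
    Order.idealOfCofinals p (Order.PartialIso.definedAtLeft ℚ)
  let F a := Order.PartialIso.funOfIdeal a I (Order.cofinal_meets_idealOfCofinals _ _ a)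
  -- Two pairs occurring in members of the ideal occur together in one member, hence compare alike.
  have hI : ∀ q₁ ∈ I, ∀ q₂ ∈ I, ∀ x ∈ q₁.1, ∀ y ∈ q₂.1, cmp x.1 y.1 = cmp x.2 y.2 := by
    intro q₁ h₁ q₂ h₂ x hx y hy
    obtain ⟨m, _, hm₁, hm₂⟩ := I.directed _ h₁ _ h₂
    exact m.2 _ (hm₁ hx) _ (hm₂ hy)
  refine ⟨fun a => (F a).1, fun a b hab => ?_, fun a ha => ?_⟩
  · obtain ⟨q₁, h₁, hx⟩ := (F a).2
    obtain ⟨q₂, h₂, hy⟩ := (F b).2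
    exact (lt_iff_lt_of_cmp_eq_cmp (hI _ h₁ _ h₂ _ hx _ hy)).1 hab
  · obtain ⟨q₁, h₁, hx⟩ := (F a).2
    have hpa : (a, f a) ∈ p.1 := Finset.mem_image.2 ⟨a, by simpa using ha, rfl⟩
    have hpI : p ∈ I := Order.mem_idealOfCofinals _ _
    exact (eq_iff_eq_of_cmp_eq_cmp (hI _ h₁ _ hpI _ hx _ hpa)).1 rfl

/-- A partially defined tree embedding can be completed. Here `D` is a set of words closed under
prefixes, `G` is the embedding on `D`, and `φ y` is a strictly increasing relabelling of all letters
compatible with `G` at the children of `y` in `D`. A word outside `D` is placed by following `φ`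
letter by letter from its longest prefix in `D` (or from the root, if `D` is empty). -/
theorem exists_treeEmb_of_partial {D : Set Word} {G : Word → Word}
    (hD : ∀ y b, y ++ [b] ∈ D → y ∈ D) (hG : G [] = []) {φ : Word → ℚ → ℚ}
    (hmono : ∀ y, StrictMono (φ y)) (hφ : ∀ y b, y ++ [b] ∈ D → G y ++ [φ y b] <+: G (y ++ [b])) :
    ∃ g, IsTreeEmb g ∧ ∀ x ∈ D, g x = G x := by
  classical
  let g : Word → Word := fun x => List.reverseRecOn (motive := fun _ => Word) x []
    (fun y b gy => if y ++ [b] ∈ D then G (y ++ [b]) else gy ++ [φ y b])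
  have g_nil : g [] = [] := by simp [g]
  have g_concat : ∀ y b, g (y ++ [b]) =
      if y ++ [b] ∈ D then G (y ++ [b]) else g y ++ [φ y b] := by
    intro y b
    simp only [g, List.reverseRecOn_concat]
  have hgD : ∀ x ∈ D, g x = G x := by
    intro x hx
    induction x using List.reverseRecOn with
    | nil => rw [g_nil, hG]
    | append_singleton y b _ => rw [g_concat, if_pos hx]
  refine ⟨g, ⟨g_nil, φ, hmono, fun y b => ?_⟩, hgD⟩
  rw [g_concat]
  split_ifs with h
  · rw [hgD y (hD y b h)]
    exact hφ y b h
  · exact List.prefix_rfl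

theorem IsInducedIso.map_nil {C : List Word} {k : ℕ} {w v : Fin k → Word} {h : Word → Word}
    (hh : IsInducedIso C w v h) : h [] = [] := by
  obtain ⟨s, hs, hs'⟩ := hh.1.surjOn (nil_mem_MCAT C v)
  have := ((hh.2.1 _ (nil_mem_MCAT C w) s hs).1).1 List.nil_prefix
  rw [hs'] at this
  simpa using this

/-- The induced isomorphism of a pair `w ≼* v` extends to a tree embedding of all words. -/
theorem exists_treeEmb {C : List Word} {k : ℕ} {w v : Fin k → Word} {h : Word → Word}
    (hh : IsInducedIso C w v h) (hs : StretchCond C w h) :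
    ∃ g, IsTreeEmb g ∧ ∀ x ∈ MCAT C w, g x = h x := by
  classical
  set S := MCAT C w with hS
  let D : Set Word := {x | ∃ s ∈ S, x <+: s}
  have hSD : ∀ x ∈ S, x ∈ D := fun x hx => ⟨x, hx, List.prefix_rfl⟩
  have hDdown : ∀ y b, y ++ [b] ∈ D → y ∈ D := by
    rintro y b ⟨s, hs, hy⟩
    exact ⟨s, hs, (List.prefix_append _ _).trans hy⟩
  -- `u x` is the least element of `S` above `x`
  have hu : ∀ x, ∃ u, x ∈ D → u ∈ S ∧ x <+: u ∧ ∀ s ∈ S, x <+: s → u <+: s := by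
    intro x
    by_cases hx : x ∈ D
    · obtain ⟨u, h₁, h₂, h₃⟩ := exists_least_above hx
      exact ⟨u, fun _ => ⟨h₁, h₂, h₃⟩⟩
    · exact ⟨[], fun h => absurd h hx⟩
  choose u hu using hu
  have hstr : ∀ d ∈ S, ∀ e ∈ S, d <+: e → e.length + (h d).length ≤ (h e).length + d.length := by
    intro d hd e he hde
    by_cases hne : d = e
    · subst hne; omega
    · exact hs d hd e he hde hne
  have hgrow : ∀ e ∈ S, e.length ≤ (h e).length := by
    intro e he
    simpa [hh.map_nil] using hstr [] (nil_mem_MCAT C w) e he List.nil_prefix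
  -- the truncated subtraction is harmless, by `hgrow`
  let G : Word → Word := fun x => (h (u x)).take ((h (u x)).length + x.length - (u x).length)
  have hGlen : ∀ x ∈ D, (G x).length + (u x).length = (h (u x)).length + x.length := by
    intro x hx
    obtain ⟨h₁, h₂, -⟩ := hu x hx
    have := hgrow _ h₁
    have := h₂.length_le
    simp only [G, List.length_take]
    omega
  have hGpre : ∀ x, G x <+: h (u x) := fun x => List.take_prefix _ _
  have huS : ∀ x ∈ S, u x = x := by
    intro x hx
    obtain ⟨-, h₂, h₃⟩ := hu x (hSD x hx)
    exact prefix_antisymm' (h₃ x hx List.prefix_rfl) h₂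
  have hGS : ∀ x ∈ S, G x = h x := by
    intro x hx
    simp [G, huS x hx]
  have hGnil : G [] = [] := by rw [hGS _ (nil_mem_MCAT C w), hh.map_nil]
  -- the image of a child lies strictly above the image of its parent
  have hchild : ∀ y b, y ++ [b] ∈ D → ∃ b', G y ++ [b'] <+: G (y ++ [b]) := by
    intro y b hyb
    have hy := hDdown y b hyb
    obtain ⟨h₁, h₂, h₃⟩ := hu _ hyb
    obtain ⟨k₁, k₂, k₃⟩ := hu _ hy
    have hle : u y <+: u (y ++ [b]) := k₃ _ h₁ ((List.prefix_append _ _).trans h₂)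
    have hpre : G y <+: h (u (y ++ [b])) :=
      (hGpre y).trans (((hh.2.1 _ k₁ _ h₁).1).1 hle)
    have e₁ := hGlen _ hyb
    have e₂ := hGlen _ hy
    have e₃ := hstr _ k₁ _ h₁ hle
    simp only [List.length_append, List.length_singleton] at e₁
    have hlt : (G y).length < (G (y ++ [b])).length := by omega
    exact exists_next (List.prefix_of_prefix_length_le hpre (hGpre _) hlt.le) hlt
  have hφ : ∀ y, ∃ φ : ℚ → ℚ, StrictMono φ ∧
      ∀ b, y ++ [b] ∈ D → G y ++ [φ b] <+: G (y ++ [b]) := by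
    intro y
    have hf : ∀ b, ∃ b', y ++ [b] ∈ D → G y ++ [b'] <+: G (y ++ [b]) := by
      intro b
      by_cases hb : y ++ [b] ∈ D
      · obtain ⟨b', hb'⟩ := hchild y b hb
        exact ⟨b', fun _ => hb'⟩
      · exact ⟨0, fun h => absurd h hb⟩
    choose f hf using hf
    -- every branch at `y` inside `D` is the letter of some element of `S` at position `|y|`
    have hfin : {b | y ++ [b] ∈ D}.Finite := by
      refine ((MCAT_finite C w).image fun s : Word => s.getD y.length 0).subset ?_
      rintro b ⟨s, hsS, t, rfl⟩
      exact ⟨_, hsS, by simp⟩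
    obtain ⟨φ, hmono, hφ⟩ := exists_strictMono_extension hfin f (by
      intro a ha b hb hab
      obtain ⟨a₁, a₂, -⟩ := hu _ ha
      obtain ⟨b₁, b₂, -⟩ := hu _ hb
      have hyS : y ∈ S := by
        rw [← lcp_eq_of_branch hab.ne a₂ b₂]
        exact lcp_mem_MCAT a₁ b₁
      have ha' := (hf a ha).trans (hGpre _)
      have hb' := (hf b hb).trans (hGpre _)
      have hne : f a ≠ f b := by
        intro he
        -- otherwise the meet of the two images is `h s` for some `s ∈ S` lying below `y`
        obtain ⟨s, hsS, hs'⟩ := hh.1.surjOn (lcp_mem_MCAT (hh.1.mapsTo a₁) (hh.1.mapsTo b₁))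
        obtain ⟨m₁, m₂⟩ := prefix_lcp_iff.1 (List.prefix_rfl
          (l := lcp (h (u (y ++ [a]))) (h (u (y ++ [b])))))
        rw [← hs'] at m₁ m₂
        have hsy : s <+: y := by
          rw [← lcp_eq_of_branch hab.ne a₂ b₂]
          exact prefix_lcp_iff.2 ⟨((hh.2.1 _ hsS _ a₁).1).2 m₁, ((hh.2.1 _ hsS _ b₁).1).2 m₂⟩
        have hsy' := ((hh.2.1 _ hsS _ hyS).1).1 hsy
        rw [he] at ha'
        have hlong := prefix_lcp_iff.2 ⟨ha', hb'⟩
        rw [← hs', hGS y hyS] at hlong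
        have := (hlong.trans hsy').length_le
        simp at this
      rw [← lexLe_iff_of_branch hne ha' hb', ← (hh.2.1 _ a₁ _ b₁).2]
      exact Or.inr ⟨y, a, b, hab, a₂, b₂⟩)
    exact ⟨φ, hmono, fun b hb => by rw [hφ b hb]; exact hf b hb⟩
  choose φ hmono hφ using hφ
  obtain ⟨g, hg, hgD⟩ := exists_treeEmb_of_partial hDdown hGnil hmono hφ
  exact ⟨g, hg, fun x hx => by rw [hgD x (hSD x hx), hGS x hx]⟩

theorem Stretch.exists_treeEmb {C : List Word} {k : ℕ} {w w' : Fin k → Word}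
    (hw : Stretch C w w') : ∃ g, IsTreeEmb g ∧ (∀ c ∈ C, g c = c) ∧ g ∘ w = w' := by
  obtain ⟨h, hh, hs⟩ := hw
  obtain ⟨g, hg, hgh⟩ := CLTL.exists_treeEmb hh hs
  refine ⟨g, hg, fun c hc => ?_, funext fun i => ?_⟩
  · rw [hgh c (const_mem_MCAT C w hc), hh.2.2.1 c hc]
  · exact (hgh _ (entry_mem_MCAT C w i)).trans (hh.2.2.2 i)

theorem IsTreeEmb.sameTyp_append {g : Word → Word} (hg : IsTreeEmb g) {C : List Word}
    (hC : ∀ c ∈ C, g c = c) {n : ℕ} (w v : Fin n → Word) :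
    SameTyp C (Fin.append w v) (Fin.append (g ∘ w) (g ∘ v)) := by
  have happ : g ∘ Fin.append w v = Fin.append (g ∘ w) (g ∘ v) := by
    funext i
    refine Fin.addCases (fun j => ?_) (fun j => ?_) i
    · simp
    · simp only [Function.comp_apply, Fin.append_right]
  exact ⟨g, happ ▸ hg.isInducedIso hC _⟩

/-- A type-invariant transition relation and its inverse are strongly upward compatible
with respect to `≼*`. -/
theorem stmt5 (C : List Word) (hC : ∀ c ∈ C, ∀ c' : Word, c' <+: c → c' ∈ C)
    {Q : Type*} {n : ℕ}
    (step : (Q × (Fin n → Word)) → (Q × (Fin n → Word)) → Prop)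
    (hstep : TypeInvariant C step) :
    (∀ c d c' : Q × (Fin n → Word), step c d → ConfigLe C c c' →
      ∃ d', ConfigLe C d d' ∧ step c' d') ∧
    (∀ c d d' : Q × (Fin n → Word), step c d → ConfigLe C d d' →
      ∃ c', ConfigLe C c c' ∧ step c' d') := by
  refine ⟨?_, ?_⟩
  · rintro ⟨q, w⟩ ⟨p, v⟩ ⟨q', w'⟩ hcd ⟨hq, hw⟩
    obtain rfl : q = q' := hq
    obtain ⟨g, hg, hgC, rfl⟩ := Stretch.exists_treeEmb hw
    exact ⟨(p, g ∘ v), ⟨rfl, g, hg.isInducedIso hgC v, hg.stretchCond C v⟩,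
      hstep _ _ _ _ _ _ hcd (hg.sameTyp_append hgC w v)⟩
  · rintro ⟨q, w⟩ ⟨p, v⟩ ⟨p', v'⟩ hcd ⟨hp, hv⟩
    obtain rfl : p = p' := hp
    obtain ⟨g, hg, hgC, rfl⟩ := Stretch.exists_treeEmb hv
    exact ⟨(q, g ∘ w), ⟨rfl, g, hg.isInducedIso hgC w, hg.stretchCond C w⟩,
      hstep _ _ _ _ _ _ hcd (hg.sameTyp_append hgC w v)⟩

end CLTL
end
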